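/- arXiv:1612.07345 — 6 statements merged into one kernel-verified Lean document; each statement's English description precedes it below -/
import Mathlib

section
/- For all x, y ∈ L and a, b ∈ B, if x ≤ y in L and a ≰ b in B, then {(x,a), (y,b)} ⊢ ∅. -/
/-- An entailment relation on a set `S`: a relation between finite subsets of `S`
satisfying reflexivity (R), monotonicity (M) and transitivity/cut (T). -/
def IsEntailment {S : Type*} [DecidableEq S] (E : Finset S → Finset S → Prop) : Prop :=
  (∀ X Y : Finset S, (∃ x, x ∈ X ∧ x ∈ Y) → E X Y) ∧
  (∀ X X' Y Y' : Finset S, E X Y → E (X ∪ X') (Y ∪ Y')) ∧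
  (∀ X Y : Finset S, ∀ z : S, E X (insert z Y) → E (insert z X) Y → E X Y)

variable (M : Type*) (D : Type*) [Lattice M] [BoundedOrder M] [Lattice D] [BoundedOrder D]
  [Fintype D] [DecidableEq M] [DecidableEq D]

/-- The generating axioms (s), (∧), (∨), (0), (1), (t) for the entailment relation
of `D`-valued lattice maps on `M`. -/
def LatticeAxioms : Finset (M × D) → Finset (M × D) → Prop := fun X Y =>
  (∃ x a b, a ≠ b ∧ X = {(x, a), (x, b)} ∧ Y = ∅) ∨
  (∃ x y a b, X = {(x, a), (y, b)} ∧ Y = {(x ⊓ y, a ⊓ b)}) ∨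
  (∃ x y a b, X = {(x, a), (y, b)} ∧ Y = {(x ⊔ y, a ⊔ b)}) ∨
  (X = ∅ ∧ Y = {((⊥ : M), (⊥ : D))}) ∨
  (X = ∅ ∧ Y = {((⊤ : M), (⊤ : D))}) ∨
  (∃ x : M, X = ∅ ∧ Y = Finset.univ.image (fun a : D => (x, a)))

/-- The least entailment relation on `M × D` containing all the generating axioms:
the entailment relation of `D`-valued lattice maps on `M`. -/
def LatticeEntails (X Y : Finset (M × D)) : Prop :=
  ∀ E : Finset (M × D) → Finset (M × D) → Prop,
    IsEntailment E → (∀ X' Y', LatticeAxioms M D X' Y' → E X' Y') → E X Y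

namespace IsEntailment

variable {S : Type*} [DecidableEq S] {E : Finset S → Finset S → Prop}

theorem mono (hE : IsEntailment E) {X X' Y Y' : Finset S} (hX : X ⊆ X') (hY : Y ⊆ Y')
    (h : E X Y) : E X' Y' := by
  simpa only [Finset.union_eq_right.2 hX, Finset.union_eq_right.2 hY] using hE.2.1 X X' Y Y' h

theorem cut (hE : IsEntailment E) {X Y : Finset S} {z : S} (hr : E X (insert z Y))
    (hl : E (insert z X) Y) : E X Y :=
  hE.2.2 X Y z hr hl

end IsEntailment

section LatticeAxioms

variable {M D}

theorem latticeAxioms_of_ne (x : M) {a b : D} (hab : a ≠ b) :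
    LatticeAxioms M D {(x, a), (x, b)} ∅ :=
  .inl ⟨x, a, b, hab, rfl, rfl⟩

theorem latticeAxioms_inf (x y : M) (a b : D) :
    LatticeAxioms M D {(x, a), (y, b)} {(x ⊓ y, a ⊓ b)} :=
  .inr (.inl ⟨x, y, a, b, rfl, rfl⟩)

end LatticeAxioms

theorem stmt2_general {P Q : Type*} [SemilatticeInf P] [SemilatticeInf Q] [DecidableEq P]
    [DecidableEq Q] {E : Finset (P × Q) → Finset (P × Q) → Prop} (hE : IsEntailment E)
    (single_valued : ∀ (x : P) {a b : Q}, a ≠ b → E {(x, a), (x, b)} ∅)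
    (map_inf : ∀ (x y : P) (a b : Q), E {(x, a), (y, b)} {(x ⊓ y, a ⊓ b)})
    {x y : P} {a b : Q} (hxy : x ≤ y) (hab : ¬ a ≤ b) :
    E {(x, a), (y, b)} ∅ := by
  have meet_value : E {(x, a), (y, b)} {(x, a ⊓ b)} := by
    simpa only [inf_eq_left.2 hxy] using map_inf x y a b
  have clash : E {(x, a ⊓ b), (x, a)} ∅ := single_valued x (mt inf_eq_left.1 hab)
  have clash_weakened : E {(x, a ⊓ b), (x, a), (y, b)} ∅ :=
    hE.mono (Finset.insert_subset_insert _ (by simp)) subset_rfl clash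
  exact hE.cut meet_value clash_weakened

theorem stmt2 {L B : Type*} [DistribLattice L] [BoundedOrder L] [BooleanAlgebra B]
    [Fintype B] [DecidableEq L] [DecidableEq B]
    (x y : L) (a b : B) (hxy : x ≤ y) (hab : ¬ a ≤ b) :
    LatticeEntails L B {(x, a), (y, b)} ∅ := by
  intro E hE hA
  exact stmt2_general hE (fun x _ _ hne ↦ hA _ _ (latticeAxioms_of_ne x hne))
    (fun x y a b ↦ hA _ _ (latticeAxioms_inf x y a b)) hxy hab
end

section
/- Let A be a finite inhabited set and let L and R be subsets of A. If for every finite subset U of A there exists an element a ∈ A such that (a ∈ U and a ∈ L) or (a ∉ U and a ∈ R), then L and R have an element in common, i.e. L ∩ R is inhabited. -/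
theorem stmt5_general {A : Type*} (L R : Set A) (hfin : (R \ L).Finite)
    (h : ∀ U : Finset A, ∃ a : A, (a ∈ U ∧ a ∈ L) ∨ (a ∉ U ∧ a ∈ R)) :
    (L ∩ R).Nonempty := by
  obtain ⟨a, ⟨haU, haL⟩ | ⟨haU, haR⟩⟩ := h hfin.toFinset
  · have haRL : a ∈ R \ L := hfin.mem_toFinset.mp haU
    exact absurd haL haRL.2
  · have haL : a ∈ L := by
      by_contra haL
      exact haU (hfin.mem_toFinset.mpr ⟨haR, haL⟩)
    exact ⟨a, haL, haR⟩

theorem stmt5 {A : Type*} [Fintype A] [Nonempty A] (L R : Set A)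
    (h : ∀ U : Finset A, ∃ a : A, (a ∈ U ∧ a ∈ L) ∨ (a ∉ U ∧ a ∈ R)) :
    (L ∩ R).Nonempty :=
  stmt5_general L R (R \ L).toFinite h
end

section
/- Let L be a bounded distributive lattice, B a finite Boolean algebra, X a finite subset of L × B, and x ∈ L. If for every b ∈ B there exists an atom e of B such that ⋀_{a ≥ e} ⋀ (X ∪ {(x,b)})_a ≤ ⋁_{a ≥ e} ⋁ (X ∪ {(x,b)})_{-a} holds in L, then there exists an atom e' of B such that ⋀_{a ≥ e'} ⋀ X_a ≤ ⋁_{a ≥ e'} ⋁ X_{-a} holds in L. -/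
/-- `⋀_{a ≥ e} ⋀ X_a`: the meet in `L` over all `x` with `(x, a) ∈ X` for some `a ≥ e`;
the empty meet is `⊤`. -/
def atomMeet {L B : Type*} [Lattice L] [OrderTop L] [BooleanAlgebra B] [DecidableRel ((· ≤ ·) : B → B → Prop)]
    (e : B) (X : Finset (L × B)) : L :=
  (X.filter fun p => e ≤ p.2).inf Prod.fst

/-- `⋁_{a ≥ e} ⋁ X_{-a}`: the join in `L` over all `x` with `(x, aᶜ) ∈ X` for some `a ≥ e`;
the empty join is `⊥`. -/
def atomJoin {L B : Type*} [Lattice L] [OrderBot L] [BooleanAlgebra B] [DecidableRel ((· ≤ ·) : B → B → Prop)]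
    (e : B) (X : Finset (L × B)) : L :=
  (X.filter fun p => e ≤ p.2ᶜ).sup Prod.fst

/-!
Because `X` is finite, the atoms `e` with `x ⊓ atomMeet e X ≤ atomJoin e X` are exactly the atoms
below some `b : B`, a Boolean combination of the second components of `X`. Apply the hypothesis to
`bᶜ`. The atom `e` it provides cannot lie below `bᶜ`, since there the inequality it satisfies would
be the one that puts `e` below `b`. Hence `e ≤ b`, so that `x ⊓ atomMeet e X ≤ atomJoin e X`, and
the hypothesis reads `atomMeet e X ≤ x ⊔ atomJoin e X`; distributivity cuts `x` from these two.
-/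

section HeytingAlgebra

variable {B : Type*} [HeytingAlgebra B] {e : B}

theorem le_himp_iff_imp_of_isAtom (he : IsAtom e) (a b : B) :
    e ≤ a ⇨ b ↔ (e ≤ a → e ≤ b) := by
  rw [le_himp_iff]
  by_cases ha : e ≤ a
  · rw [inf_eq_left.mpr ha, imp_iff_right ha]
  · rw [(he.not_le_iff_disjoint.mp ha).eq_bot]
    exact iff_of_true bot_le (absurd · ha)

theorem le_compl_iff_not_le_of_isAtom (he : IsAtom e) (a : B) : e ≤ aᶜ ↔ ¬ e ≤ a := by
  rw [le_compl_iff_disjoint_right, he.not_le_iff_disjoint]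

end HeytingAlgebra

section Insert

variable {L B : Type*} [Lattice L] [BooleanAlgebra B] [DecidableEq L] [DecidableEq B]
  [DecidableRel ((· ≤ ·) : B → B → Prop)] {e a : B}

theorem atomMeet_insert_of_le [OrderTop L] (h : e ≤ a) (x : L) (X : Finset (L × B)) :
    atomMeet e (insert (x, a) X) = x ⊓ atomMeet e X := by
  rw [atomMeet, Finset.filter_insert, if_pos h, Finset.inf_insert, atomMeet]

theorem atomMeet_insert_of_not_le [OrderTop L] (h : ¬ e ≤ a) (x : L) (X : Finset (L × B)) :
    atomMeet e (insert (x, a) X) = atomMeet e X := by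
  rw [atomMeet, Finset.filter_insert, if_neg h, atomMeet]

theorem atomJoin_insert_of_le_compl [OrderBot L] (h : e ≤ aᶜ) (x : L) (X : Finset (L × B)) :
    atomJoin e (insert (x, a) X) = x ⊔ atomJoin e X := by
  rw [atomJoin, Finset.filter_insert, if_pos h, Finset.sup_insert, atomJoin]

theorem atomJoin_insert_of_not_le_compl [OrderBot L] (h : ¬ e ≤ aᶜ) (x : L)
    (X : Finset (L × B)) : atomJoin e (insert (x, a) X) = atomJoin e X := by
  rw [atomJoin, Finset.filter_insert, if_neg h, atomJoin]

end Insert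

theorem exists_forall_isAtom_le_iff_inf_atomMeet_le_sup_atomJoin {L B : Type*} [Lattice L]
    [BoundedOrder L] [BooleanAlgebra B] [DecidableRel ((· ≤ ·) : B → B → Prop)]
    (X : Finset (L × B)) (x y : L) :
    ∃ b : B, ∀ e, IsAtom e → (e ≤ b ↔ x ⊓ atomMeet e X ≤ y ⊔ atomJoin e X) := by
  classical
  induction X using Finset.induction_on generalizing x y with
  | empty =>
    by_cases hxy : x ≤ y
    · exact ⟨⊤, fun e _ => by simpa [atomMeet, atomJoin] using hxy⟩
    · exact ⟨⊥, fun e he => by simpa [atomMeet, atomJoin, he.ne_bot] using hxy⟩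
  | insert p X _ ih =>
    obtain ⟨z, a⟩ := p
    -- The pair `(z, a)` adjoins `z` to the meet at the atoms below `a`, to the join at the others.
    obtain ⟨b₁, hb₁⟩ := ih (x ⊓ z) y
    obtain ⟨b₀, hb₀⟩ := ih x (y ⊔ z)
    refine ⟨(a ⇨ b₁) ⊓ (aᶜ ⇨ b₀), fun e he => ?_⟩
    have hcompl : e ≤ aᶜ ↔ ¬ e ≤ a := le_compl_iff_not_le_of_isAtom he a
    rw [le_inf_iff, le_himp_iff_imp_of_isAtom he, le_himp_iff_imp_of_isAtom he, hcompl,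
      hb₁ e he, hb₀ e he]
    by_cases ha : e ≤ a
    · rw [atomMeet_insert_of_le ha, atomJoin_insert_of_not_le_compl (hcompl.not_left.mpr ha),
        ← inf_assoc]
      simp only [ha, true_imp_iff, not_true_eq_false, false_imp_iff, and_true]
    · rw [atomMeet_insert_of_not_le ha, atomJoin_insert_of_le_compl (hcompl.mpr ha),
        ← sup_assoc]
      simp only [ha, true_imp_iff, not_false_eq_true, false_imp_iff, true_and]

theorem stmt6_general {L B : Type*} [DistribLattice L] [BoundedOrder L] [BooleanAlgebra B]
    [DecidableEq L] [DecidableEq B] [DecidableRel ((· ≤ ·) : B → B → Prop)]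
    (X : Finset (L × B)) (x : L)
    (h : ∀ b : B, ∃ e : B, IsAtom e ∧
      atomMeet e (insert (x, b) X) ≤ atomJoin e (insert (x, b) X)) :
    ∃ e' : B, IsAtom e' ∧ atomMeet e' X ≤ atomJoin e' X := by
  obtain ⟨b, hb⟩ := exists_forall_isAtom_le_iff_inf_atomMeet_le_sup_atomJoin X x ⊥
  simp only [bot_sup_eq] at hb
  obtain ⟨e, he, hle⟩ := h bᶜ
  have hcompl : e ≤ bᶜ ↔ ¬ e ≤ b := le_compl_iff_not_le_of_isAtom he b
  have heb : e ≤ b := by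
    by_contra hnb
    have hnc : ¬ e ≤ bᶜᶜ := by rwa [compl_compl]
    rw [atomMeet_insert_of_le (hcompl.mpr hnb), atomJoin_insert_of_not_le_compl hnc] at hle
    exact hnb ((hb e he).mpr hle)
  have hinf : x ⊓ atomMeet e X ≤ atomJoin e X := (hb e he).mp heb
  have hsup : atomMeet e X ≤ x ⊔ atomJoin e X := by
    rwa [atomMeet_insert_of_not_le (hcompl.not_left.mpr heb),
      atomJoin_insert_of_le_compl (heb.trans_eq (compl_compl b).symm)] at hle
  refine ⟨e, he, le_of_inf_le_sup_le (z := x) ?_ ?_⟩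
  · exact le_inf (inf_comm x _ ▸ hinf) inf_le_right
  · exact sup_le (sup_comm x _ ▸ hsup) le_sup_right

theorem stmt6 {L B : Type*} [DistribLattice L] [BoundedOrder L] [BooleanAlgebra B]
    [Fintype B] [DecidableEq L] [DecidableEq B] [DecidableRel ((· ≤ ·) : B → B → Prop)]
    (X : Finset (L × B)) (x : L)
    (h : ∀ b : B, ∃ e : B, IsAtom e ∧
      atomMeet e (insert (x, b) X) ≤ atomJoin e (insert (x, b) X)) :
    ∃ e' : B, IsAtom e' ∧ atomMeet e' X ≤ atomJoin e' X :=
  stmt6_general X x h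
end

section
/- The following are equivalent: (1) ∅ ⊢ ∅, i.e. the entailment relation ⊢ is trivial; (2) 1 = 0 in L. -/
variable (M : Type*) (D : Type*) [Lattice M] [BoundedOrder M] [Lattice D] [BoundedOrder D]
  [Fintype D] [DecidableEq M] [DecidableEq D]

/- Every bounded lattice homomorphism `f` is a model of the axioms, and in its model `∅ ⊢ ∅` fails.
A nontrivial distributive lattice has a prime ideal, whose characteristic map is such an `f`.
Conversely, if `1 = 0` in `L`, then the single element `0 = 1` is forced to take both values `0`
and `1`, which single-valuedness forbids. -/

/-- The entailment relation of a single model: `T` is the set of propositions that hold in it, and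
`X ⊢ Y` means that if all of `X` holds then some member of `Y` holds. -/
def ModelEntails {S : Type*} (T : Set S) (X Y : Finset S) : Prop :=
  (X : Set S) ⊆ T → ∃ s ∈ Y, s ∈ T

section Entailment

variable {S : Type*} {E : Finset S → Finset S → Prop}

theorem not_modelEntails_empty_empty (T : Set S) : ¬ ModelEntails T ∅ ∅ := by
  simp [ModelEntails]

variable [DecidableEq S]

theorem isEntailment_modelEntails (T : Set S) : IsEntailment (ModelEntails T) := by
  refine ⟨?reflexivity, ?monotonicity, ?cut⟩
  case reflexivity =>
    rintro X Y ⟨s, hsX, hsY⟩ hX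
    exact ⟨s, hsY, hX hsX⟩
  case monotonicity =>
    intro X X' Y Y' hXY hX
    rw [Finset.coe_union, Set.union_subset_iff] at hX
    obtain ⟨s, hsY, hsT⟩ := hXY hX.1
    exact ⟨s, Finset.mem_union_left Y' hsY, hsT⟩
  case cut =>
    intro X Y z hz hzX hX
    obtain ⟨s, hs, hsT⟩ := hz hX
    rcases Finset.mem_insert.mp hs with rfl | hsY
    · exact hzX (by rw [Finset.coe_insert]; exact Set.insert_subset hsT hX)
    · exact ⟨s, hsY, hsT⟩

theorem IsEntailment.empty_empty_of_pair (hE : IsEntailment E) {s t : S} (hs : E ∅ {s})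
    (ht : E ∅ {t}) (hst : E {s, t} ∅) : E ∅ ∅ := by
  obtain ⟨-, monotonicity, cut⟩ := hE
  have hs_t : E {t} {s} := by simpa using monotonicity ∅ {t} {s} ∅ hs
  have ht_empty : E {t} ∅ := cut {t} ∅ s hs_t hst
  exact cut ∅ ∅ t ht ht_empty

end Entailment

section LatticeMaps

variable {M D}

theorem isEntailment_latticeEntails : IsEntailment (LatticeEntails M D) :=
  ⟨fun X Y h _ hE _ => hE.1 X Y h,
    fun X X' Y Y' h E hE hA => hE.2.1 X X' Y Y' (h E hE hA),
    fun X Y z h h' E hE hA => hE.2.2 X Y z (h E hE hA) (h' E hE hA)⟩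

theorem LatticeAxioms.latticeEntails {X Y : Finset (M × D)} (h : LatticeAxioms M D X Y) :
    LatticeEntails M D X Y :=
  fun _ _ hA => hA X Y h

theorem latticeEntails_pair_empty (x : M) {a b : D} (hab : a ≠ b) :
    LatticeEntails M D {(x, a), (x, b)} ∅ :=
  LatticeAxioms.latticeEntails <| .inl ⟨x, a, b, hab, rfl, rfl⟩

theorem latticeEntails_bot : LatticeEntails M D ∅ {(⊥, ⊥)} :=
  LatticeAxioms.latticeEntails <| .inr <| .inr <| .inr <| .inl ⟨rfl, rfl⟩

theorem latticeEntails_top : LatticeEntails M D ∅ {(⊤, ⊤)} :=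
  LatticeAxioms.latticeEntails <| .inr <| .inr <| .inr <| .inr <| .inl ⟨rfl, rfl⟩

theorem latticeEntails_empty_empty_of_top_eq_bot [Nontrivial D] (h : (⊤ : M) = ⊥) :
    LatticeEntails M D ∅ ∅ :=
  isEntailment_latticeEntails.empty_empty_of_pair latticeEntails_bot (h ▸ latticeEntails_top)
    (latticeEntails_pair_empty ⊥ bot_ne_top)

theorem LatticeAxioms.modelEntails_graph (f : BoundedLatticeHom M D) {X Y : Finset (M × D)}
    (h : LatticeAxioms M D X Y) : ModelEntails (Function.graph f) X Y := by
  rcases h with ⟨x, a, b, hab, rfl, rfl⟩ | ⟨x, y, a, b, rfl, rfl⟩ | ⟨x, y, a, b, rfl, rfl⟩ |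
    ⟨rfl, rfl⟩ | ⟨rfl, rfl⟩ | ⟨x, rfl, rfl⟩ <;> intro hX
  · rw [Finset.coe_pair, Set.pair_subset_iff] at hX
    obtain ⟨ha : f x = a, hb : f x = b⟩ := hX
    exact absurd (ha.symm.trans hb) hab
  · rw [Finset.coe_pair, Set.pair_subset_iff] at hX
    obtain ⟨rfl : f x = a, rfl : f y = b⟩ := hX
    exact ⟨_, Finset.mem_singleton_self _, map_inf f x y⟩
  · rw [Finset.coe_pair, Set.pair_subset_iff] at hX
    obtain ⟨rfl : f x = a, rfl : f y = b⟩ := hX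
    exact ⟨_, Finset.mem_singleton_self _, map_sup f x y⟩
  · exact ⟨_, Finset.mem_singleton_self _, map_bot f⟩
  · exact ⟨_, Finset.mem_singleton_self _, map_top f⟩
  · exact ⟨(x, f x), Finset.mem_image_of_mem _ (Finset.mem_univ _), rfl⟩

theorem LatticeEntails.modelEntails_graph {X Y : Finset (M × D)} (h : LatticeEntails M D X Y)
    (f : BoundedLatticeHom M D) : ModelEntails (Function.graph f) X Y :=
  h _ (isEntailment_modelEntails _) fun _ _ hA => hA.modelEntails_graph f

theorem not_latticeEntails_empty_empty (f : BoundedLatticeHom M D) :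
    ¬ LatticeEntails M D ∅ ∅ :=
  fun h => not_modelEntails_empty_empty _ (h.modelEntails_graph f)

end LatticeMaps

section PrimeIdeal

variable {L : Type*}

theorem exists_isPrime_ideal [DistribLattice L] [BoundedOrder L] [Nontrivial L] :
    ∃ J : Order.Ideal L, J.IsPrime := by
  have top_disjoint_bot : Disjoint (Order.PFilter.principal (⊤ : L) : Set L)
      (Order.Ideal.principal (⊥ : L) : Set L) := by
    rw [Set.disjoint_left]
    intro x (hx : ⊤ ≤ x) (hx' : x ≤ ⊥)
    exact top_ne_bot (le_bot_iff.mp (hx.trans hx'))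
  obtain ⟨J, hJ, -⟩ := DistribLattice.prime_ideal_of_disjoint_filter_ideal top_disjoint_bot
  exact ⟨J, hJ⟩

open Classical in
/-- The characteristic homomorphism of a prime ideal `J`, with values in an arbitrary bounded
lattice `K`; it is the map onto the two-element lattice with kernel `J`, followed by the unique
bounded homomorphism from that lattice to `K`. -/
noncomputable def primeIdealHom [Lattice L] [BoundedOrder L] (K : Type*) [Lattice K]
    [BoundedOrder K] (J : Order.Ideal L) (hJ : J.IsPrime) : BoundedLatticeHom L K where
  toFun x := if x ∈ J then ⊥ else ⊤
  map_inf' x y := by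
    have inf_mem_iff : x ⊓ y ∈ J ↔ x ∈ J ∨ y ∈ J :=
      ⟨hJ.mem_or_mem, fun h => h.elim (J.lower inf_le_left) (J.lower inf_le_right)⟩
    by_cases hx : x ∈ J <;> by_cases hy : y ∈ J <;> simp [inf_mem_iff, hx, hy]
  map_sup' x y := by
    by_cases hx : x ∈ J <;> by_cases hy : y ∈ J <;> simp [Order.Ideal.sup_mem_iff, hx, hy]
  map_top' := if_neg hJ.toIsProper.top_notMem
  map_bot' := if_pos J.bot_mem

theorem nonempty_boundedLatticeHom_of_nontrivial [DistribLattice L] [BoundedOrder L]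
    [Nontrivial L] (K : Type*) [Lattice K] [BoundedOrder K] : Nonempty (BoundedLatticeHom L K) :=
  let ⟨J, hJ⟩ := exists_isPrime_ideal (L := L)
  ⟨primeIdealHom K J hJ⟩

end PrimeIdeal

theorem stmt9_general {L K : Type*} [DistribLattice L] [BoundedOrder L] [Lattice K]
    [BoundedOrder K] [Fintype K] [Nontrivial K] [DecidableEq L] [DecidableEq K] :
    LatticeEntails L K ∅ ∅ ↔ (⊤ : L) = ⊥ := by
  refine ⟨fun h => ?_, latticeEntails_empty_empty_of_top_eq_bot⟩
  by_contra hne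
  have : Nontrivial L := ⟨⊤, ⊥, hne⟩
  obtain ⟨f⟩ := nonempty_boundedLatticeHom_of_nontrivial (L := L) K
  exact not_latticeEntails_empty_empty f h

theorem stmt9 {L B : Type*} [DistribLattice L] [BoundedOrder L] [BooleanAlgebra B]
    [Fintype B] [Nontrivial B] [DecidableEq L] [DecidableEq B] :
    LatticeEntails L B ∅ ∅ ↔ (⊤ : L) = ⊥ :=
  stmt9_general
end

section
/- (Representation Theorem for distributive lattices.) If L is a bounded distributive lattice and x, y ∈ L are such that x ≰ y, then there exists a bounded lattice homomorphism φ : L → 2 into the two-element Boolean algebra 2 = {0,1} such that φ(x) = 1 and φ(y) = 0. -/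
/-!
A prime ideal is the kernel of a lattice homomorphism into the two-element lattice. If `¬ x ≤ y`,
then the filter of elements above `x` and the ideal of elements below `y` are disjoint, so Stone's
separation theorem extends the latter to a prime ideal that still avoids the former. The
homomorphism attached to this prime ideal attains both `⊤` and `⊥`, and therefore preserves them.
-/

open Order

section Bounded

variable {F α β : Type*} [Preorder α] [PartialOrder β] [FunLike F α β] [OrderHomClass F α β]

theorem map_top_of_map_eq_top [OrderTop α] [OrderTop β] {f : F} {a : α} (ha : f a = ⊤) :
    f ⊤ = ⊤ :=
  top_unique (ha.ge.trans (OrderHomClass.mono f le_top))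

theorem map_bot_of_map_eq_bot [OrderBot α] [OrderBot β] {f : F} {a : α} (ha : f a = ⊥) :
    f ⊥ = ⊥ :=
  bot_unique ((OrderHomClass.mono f bot_le).trans ha.le)

end Bounded

theorem inf_mem_iff_of_isPrime {P : Type*} [SemilatticeInf P] {J : Ideal P} (hJ : J.IsPrime)
    {a b : P} : a ⊓ b ∈ J ↔ a ∈ J ∨ b ∈ J :=
  ⟨hJ.mem_or_mem, Or.rec (J.lower inf_le_left) (J.lower inf_le_right)⟩

section PrimeIdeal

variable {L : Type*} [Lattice L] {J : Ideal L}

open scoped Classical in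
/-- The lattice homomorphism into the two-element lattice `Bool` whose kernel is a given prime
ideal, encoded as the indicator function of the complement of that ideal. -/
noncomputable def latticeHomOfIsPrime (hJ : J.IsPrime) : LatticeHom L Bool where
  toFun a := decide (a ∉ J)
  map_sup' a b := by simp [Ideal.sup_mem_iff, imp_iff_not_or]
  map_inf' a b := by simp [inf_mem_iff_of_isPrime hJ]

theorem latticeHomOfIsPrime_eq_top_iff (hJ : J.IsPrime) {a : L} :
    latticeHomOfIsPrime hJ a = ⊤ ↔ a ∉ J := by
  classical exact decide_eq_true_iff

theorem latticeHomOfIsPrime_eq_bot_iff (hJ : J.IsPrime) {a : L} :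
    latticeHomOfIsPrime hJ a = ⊥ ↔ a ∈ J := by
  classical exact decide_eq_false_iff_not.trans not_not

end PrimeIdeal

theorem disjoint_principal_principal_iff {P : Type*} [Preorder P] {x y : P} :
    Disjoint (PFilter.principal x : Set P) (Ideal.principal y : Set P) ↔ ¬ x ≤ y :=
  Set.Ici_disjoint_Iic

theorem exists_latticeHom_bool_of_disjoint {L : Type*} [DistribLattice L] {F : PFilter L}
    {I : Ideal L} (hFI : Disjoint (F : Set L) (I : Set L)) :
    ∃ φ : LatticeHom L Bool, (∀ a ∈ F, φ a = ⊤) ∧ ∀ b ∈ I, φ b = ⊥ := by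
  obtain ⟨J, hJ, hIJ, hFJ⟩ := DistribLattice.prime_ideal_of_disjoint_filter_ideal hFI
  exact ⟨latticeHomOfIsPrime hJ,
    fun _ ha ↦ (latticeHomOfIsPrime_eq_top_iff hJ).2 (Set.disjoint_left.1 hFJ ha),
    fun _ hb ↦ (latticeHomOfIsPrime_eq_bot_iff hJ).2 (hIJ hb)⟩

theorem stmt12_general {L : Type*} [DistribLattice L] (x y : L) (h : ¬ x ≤ y) :
    ∃ φ : LatticeHom L Bool, φ x = ⊤ ∧ φ y = ⊥ := by
  obtain ⟨φ, hφx, hφy⟩ :=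
    exists_latticeHom_bool_of_disjoint (disjoint_principal_principal_iff.2 h)
  exact ⟨φ, hφx x (PFilter.mem_principal.2 le_rfl), hφy y Ideal.mem_principal_self⟩

theorem stmt12 {L : Type*} [DistribLattice L] [BoundedOrder L] (x y : L)
    (h : ¬ x ≤ y) :
    ∃ φ : BoundedLatticeHom L Bool, φ x = ⊤ ∧ φ y = ⊥ := by
  obtain ⟨φ, hx, hy⟩ := stmt12_general x y h
  exact ⟨⟨φ, map_top_of_map_eq_top hx, map_bot_of_map_eq_bot hy⟩, hx, hy⟩
end

section
/- For every finite distributive bounded lattice D, the following are equivalent: (1) D is complemented, i.e. every element of D has a complement (so D is a Boolean algebra); (2) D is injective in the category of bounded distributive lattices, i.e. for every injective bounded lattice homomorphism φ : L → L' between bounded distributive lattices and every bounded lattice homomorphism f : L → D there exists a bounded lattice homomorphism g : L' → D with g ∘ φ = f. -/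
/-!
A finite lattice is complete, and Sikorski's argument shows that a complete Boolean algebra `D` is
injective. A homomorphism `f` into `D` defined on a bounded sublattice extends to one more element
`y`: its value `z` has to satisfy `f a \ f b ≤ z` whenever `a ≤ b ⊔ y`, and `z ≤ f r ⇨ f s` whenever
`r ⊓ y ≤ s`. These constraints are compatible because the two premises give `a ⊓ r ≤ b ⊔ s`, so the
supremum of the lower bounds will do. Zorn's lemma then gives an extension to the whole lattice.
Conversely, extending the map `⊥ < m < ⊤ ↦ ⊥ ≤ d ≤ ⊤` from a three-element chain to the four-element
Boolean algebra sends the complement of `m` to a complement of `d`.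
-/

/-- In a distributive lattice, the sublattice generated by a bounded sublattice `A` and one element
`v`, given by the normal form `p ⊔ q ⊓ v` of its elements. When `A` is the graph of a homomorphism,
it is the candidate for the graph of a one-element extension. -/
def latticeAdjoin {α : Type*} [Lattice α] (A : Set α) (v : α) : Set α :=
  Set.image2 (fun p q => p ⊔ q ⊓ v) A A

theorem subset_latticeAdjoin {α : Type*} [Lattice α] (A : Set α) (v : α) : A ⊆ latticeAdjoin A v :=
  fun p hp => ⟨p, hp, p, hp, sup_inf_self⟩

theorem mem_latticeAdjoin_self {α : Type*} [Lattice α] [BoundedOrder α] {A : Set α}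
    (hbot : ⊥ ∈ A) (htop : ⊤ ∈ A) (v : α) : v ∈ latticeAdjoin A v :=
  ⟨⊥, hbot, ⊤, htop, by simp⟩

theorem isSublattice_latticeAdjoin {α : Type*} [DistribLattice α] {A : Set α}
    (hA : IsSublattice A) (v : α) : IsSublattice (latticeAdjoin A v) where
  supClosed := by
    rintro _ ⟨p, hp, q, hq, rfl⟩ _ ⟨p', hp', q', hq', rfl⟩
    refine ⟨p ⊔ p', hA.supClosed hp hp', q ⊔ q', hA.supClosed hq hq', ?_⟩
    simp only [inf_sup_right, sup_sup_sup_comm]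
  infClosed := by
    rintro _ ⟨p, hp, q, hq, rfl⟩ _ ⟨p', hp', q', hq', rfl⟩
    refine ⟨p ⊓ p', hA.infClosed hp hp', p ⊓ q' ⊔ (q ⊓ p' ⊔ q ⊓ q'),
      hA.supClosed (hA.infClosed hp hq')
        (hA.supClosed (hA.infClosed hq hp') (hA.infClosed hq hq')), ?_⟩
    calc p ⊓ p' ⊔ (p ⊓ q' ⊔ (q ⊓ p' ⊔ q ⊓ q')) ⊓ v
        = p ⊓ p' ⊔ p ⊓ (q' ⊓ v) ⊔ (q ⊓ v ⊓ p' ⊔ q ⊓ v ⊓ (q' ⊓ v)) := by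
          rw [← inf_inf_distrib_right, inf_right_comm q v p', ← inf_assoc p q' v, inf_sup_right,
            inf_sup_right, sup_assoc]
      _ = (p ⊔ q ⊓ v) ⊓ (p' ⊔ q' ⊓ v) := by
          rw [inf_sup_right, inf_sup_left, inf_sup_left]

/-- A homomorphism into `D` from a bounded sublattice of `M`, encoded by its graph: a bounded
sublattice of `M × D` whose second coordinate is monotone in the first, hence a function of it.
Zorn's lemma is applied to these graphs, ordered by inclusion. -/
structure IsPartialHomGraph {M D : Type*} [Lattice M] [BoundedOrder M] [Lattice D] [BoundedOrder D]
    (A : Set (M × D)) : Prop where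
  isSublattice : IsSublattice A
  bot_mem : ⊥ ∈ A
  top_mem : ⊤ ∈ A
  snd_le_snd : ∀ ⦃p⦄, p ∈ A → ∀ ⦃q⦄, q ∈ A → p.1 ≤ q.1 → p.2 ≤ q.2

namespace IsPartialHomGraph

section Lattice

variable {L M D : Type*} [Lattice L] [BoundedOrder L] [Lattice M] [BoundedOrder M]
  [Lattice D] [BoundedOrder D] {A : Set (M × D)}

theorem range_prod {φ : BoundedLatticeHom L M} (hφ : Function.Injective φ)
    (f : BoundedLatticeHom L D) : IsPartialHomGraph (Set.range fun x => (φ x, f x)) where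
  isSublattice := by
    constructor
    · rintro _ ⟨x, rfl⟩ _ ⟨y, rfl⟩
      exact ⟨x ⊔ y, by simp only [map_sup, Prod.mk_sup_mk]⟩
    · rintro _ ⟨x, rfl⟩ _ ⟨y, rfl⟩
      exact ⟨x ⊓ y, by simp only [map_inf, Prod.mk_inf_mk]⟩
  bot_mem := ⟨⊥, Prod.ext (map_bot φ) (map_bot f)⟩
  top_mem := ⟨⊤, Prod.ext (map_top φ) (map_top f)⟩
  snd_le_snd := by
    rintro _ ⟨x, rfl⟩ _ ⟨y, rfl⟩ hxy
    exact OrderHomClass.mono f ((orderEmbeddingOfInjective φ hφ).le_iff_le.1 hxy)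

theorem sUnion {c : Set (Set (M × D))} (hc : ∀ A ∈ c, IsPartialHomGraph A)
    (hdir : DirectedOn (· ⊆ ·) c) (hne : c.Nonempty) : IsPartialHomGraph (⋃₀ c) := by
  have common_mem {p q : M × D} (hp : p ∈ ⋃₀ c) (hq : q ∈ ⋃₀ c) : ∃ A ∈ c, p ∈ A ∧ q ∈ A := by
    obtain ⟨A, hA, hpA⟩ := hp
    obtain ⟨B, hB, hqB⟩ := hq
    obtain ⟨C, hC, hAC, hBC⟩ := hdir A hA B hB
    exact ⟨C, hC, hAC hpA, hBC hqB⟩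
  obtain ⟨A₀, hA₀⟩ := hne
  refine ⟨⟨fun p hp q hq => ?_, fun p hp q hq => ?_⟩, ⟨A₀, hA₀, (hc A₀ hA₀).bot_mem⟩,
    ⟨A₀, hA₀, (hc A₀ hA₀).top_mem⟩, fun p hp q hq => ?_⟩ <;>
    obtain ⟨A, hA, hpA, hqA⟩ := common_mem hp hq
  · exact ⟨A, hA, (hc A hA).isSublattice.supClosed hpA hqA⟩
  · exact ⟨A, hA, (hc A hA).isSublattice.infClosed hpA hqA⟩
  · exact (hc A hA).snd_le_snd hpA hqA

theorem exists_maximal_superset (hA : IsPartialHomGraph A) :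
    ∃ B, A ⊆ B ∧ Maximal IsPartialHomGraph B :=
  zorn_subset_nonempty {B | IsPartialHomGraph B}
    (fun c hc hchain hne =>
      ⟨⋃₀ c, sUnion hc hchain.directedOn hne, fun _ => Set.subset_sUnion_of_mem⟩) A hA

theorem snd_unique (hA : IsPartialHomGraph A) {x : M} {z w : D} (hz : (x, z) ∈ A)
    (hw : (x, w) ∈ A) : z = w :=
  le_antisymm (hA.snd_le_snd hz hw le_rfl) (hA.snd_le_snd hw hz le_rfl)

theorem exists_boundedLatticeHom (hA : IsPartialHomGraph A) (htotal : ∀ x, ∃ z, (x, z) ∈ A) :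
    ∃ g : BoundedLatticeHom M D, ∀ x, (x, g x) ∈ A := by
  choose g hg using htotal
  exact ⟨{
    toFun := g
    map_sup' := fun x y => hA.snd_unique (hg _) (hA.isSublattice.supClosed (hg x) (hg y))
    map_inf' := fun x y => hA.snd_unique (hg _) (hA.isSublattice.infClosed (hg x) (hg y))
    map_top' := hA.snd_unique (hg _) hA.top_mem
    map_bot' := hA.snd_unique (hg _) hA.bot_mem }, hg⟩

end Lattice

theorem adjoin {M D : Type*} [DistribLattice M] [BoundedOrder M] [DistribLattice D]
    [BoundedOrder D] {A : Set (M × D)} (hA : IsPartialHomGraph A) {y : M} {z : D}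
    (hsup : ∀ p ∈ A, ∀ q ∈ A, p.1 ≤ q.1 ⊔ y → p.2 ≤ q.2 ⊔ z)
    (hinf : ∀ p ∈ A, ∀ q ∈ A, p.1 ⊓ y ≤ q.1 → p.2 ⊓ z ≤ q.2) :
    IsPartialHomGraph (latticeAdjoin A (y, z)) where
  isSublattice := isSublattice_latticeAdjoin hA.isSublattice _
  bot_mem := subset_latticeAdjoin A _ hA.bot_mem
  top_mem := subset_latticeAdjoin A _ hA.top_mem
  snd_le_snd := by
    rintro _ ⟨p, hp, q, hq, rfl⟩ _ ⟨r, hr, s, hs, rfl⟩ (hle : p.1 ⊔ q.1 ⊓ y ≤ r.1 ⊔ s.1 ⊓ y)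
    change p.2 ⊔ q.2 ⊓ z ≤ r.2 ⊔ s.2 ⊓ z
    have hrs : r ⊔ s ∈ A := hA.isSublattice.supClosed hr hs
    rw [sup_inf_left r.1, sup_le_iff, le_inf_iff, le_inf_iff] at hle
    rw [sup_inf_left r.2, sup_le_iff, le_inf_iff, le_inf_iff]
    obtain ⟨⟨hp_rs, hp_ry⟩, hq_rs, -⟩ := hle
    exact ⟨⟨hA.snd_le_snd hp hrs hp_rs, hsup p hp r hr hp_ry⟩,
      hinf q hq _ hrs hq_rs, inf_le_right.trans le_sup_right⟩

section BooleanAlgebra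

variable {M D : Type*} [DistribLattice M] [BoundedOrder M] [BooleanAlgebra D] {A : Set (M × D)}

theorem exists_extension_value (hD : ∀ s : Set D, ∃ z, IsLUB s z) (hA : IsPartialHomGraph A)
    (y : M) : ∃ z : D, (∀ p ∈ A, ∀ q ∈ A, p.1 ≤ q.1 ⊔ y → p.2 ≤ q.2 ⊔ z) ∧
      ∀ p ∈ A, ∀ q ∈ A, p.1 ⊓ y ≤ q.1 → p.2 ⊓ z ≤ q.2 := by
  obtain ⟨z, hz⟩ := hD {d | ∃ p ∈ A, ∃ q ∈ A, p.1 ≤ q.1 ⊔ y ∧ p.2 \ q.2 = d}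
  refine ⟨z, fun p hp q hq hpq => sdiff_le_iff.1 (hz.1 ⟨p, hp, q, hq, hpq, rfl⟩),
    fun p hp q hq hpq => le_himp_iff'.1 (hz.2 ?_)⟩
  rintro _ ⟨r, hr, s, hs, hrs, rfl⟩
  have h_fst : (r ⊓ p).1 ≤ (s ⊔ q).1 :=
    calc r.1 ⊓ p.1 ≤ (s.1 ⊔ y) ⊓ p.1 := inf_le_inf_right _ hrs
      _ = s.1 ⊓ p.1 ⊔ p.1 ⊓ y := by rw [inf_sup_right, inf_comm y]
      _ ≤ s.1 ⊔ q.1 := sup_le_sup inf_le_left hpq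
  have h_snd : r.2 ⊓ p.2 ≤ s.2 ⊔ q.2 :=
    hA.snd_le_snd (hA.isSublattice.infClosed hr hp) (hA.isSublattice.supClosed hs hq) h_fst
  rwa [le_himp_iff, inf_comm, ← inf_sdiff_assoc, sdiff_le_iff, inf_comm]

theorem exists_mem_of_maximal (hD : ∀ s : Set D, ∃ z, IsLUB s z)
    (hA : Maximal IsPartialHomGraph A) (y : M) : ∃ z, (y, z) ∈ A := by
  obtain ⟨z, hsup, hinf⟩ := hA.prop.exists_extension_value hD y
  exact ⟨z, hA.le_of_ge (hA.prop.adjoin hsup hinf) (subset_latticeAdjoin A _)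
    (mem_latticeAdjoin_self hA.prop.bot_mem hA.prop.top_mem _)⟩

end BooleanAlgebra

end IsPartialHomGraph

theorem exists_boundedLatticeHom_extension {L M D : Type*} [Lattice L] [BoundedOrder L]
    [DistribLattice M] [BoundedOrder M] [BooleanAlgebra D] (hD : ∀ s : Set D, ∃ z, IsLUB s z)
    {φ : BoundedLatticeHom L M} (hφ : Function.Injective φ) (f : BoundedLatticeHom L D) :
    ∃ g : BoundedLatticeHom M D, ∀ x, g (φ x) = f x := by
  obtain ⟨A, hfA, hA⟩ := (IsPartialHomGraph.range_prod hφ f).exists_maximal_superset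
  obtain ⟨g, hg⟩ :=
    hA.prop.exists_boundedLatticeHom (IsPartialHomGraph.exists_mem_of_maximal hD hA)
  exact ⟨g, fun x => hA.prop.snd_unique (hg (φ x)) (hfA ⟨x, rfl⟩)⟩

section ThreeChain

variable {D : Type*} [Lattice D] [BoundedOrder D]

/-- The homomorphism from the three-element chain whose middle element goes to `d`. The chain is
`Fin 3`, lifted so that it can serve as a test object in any universe. -/
def threeChainHom (d : D) : BoundedLatticeHom (ULift (Fin 3)) D :=
  have hmono : Monotone ![⊥, d, ⊤] := by simp [Fin.monotone_iff_le_succ, Fin.forall_fin_two]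
  { toFun := fun i => ![⊥, d, ⊤] i.down
    map_sup' := fun i j => hmono.map_sup i.down j.down
    map_inf' := fun i j => hmono.map_inf i.down j.down
    map_top' := rfl
    map_bot' := rfl }

theorem threeChainHom_injective {d : D} (hbot : d ≠ ⊥) (htop : d ≠ ⊤) :
    Function.Injective (threeChainHom d) := by
  have hmono : StrictMono ![⊥, d, ⊤] := by
    simp [Fin.strictMono_iff_lt_succ, Fin.forall_fin_two, bot_lt_iff_ne_bot, lt_top_iff_ne_top,
      hbot, htop]
  exact hmono.injective.comp ULift.down_injective

theorem exists_isCompl_of_threeChainHom_extension {M : Type*} [Lattice M] [BoundedOrder M] {d : D}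
    {m m' : M} (hm : IsCompl m m') {g : BoundedLatticeHom M D}
    (hg : ∀ i, g (threeChainHom m i) = threeChainHom d i) : ∃ d', IsCompl d d' := by
  have hgm : g m = d := hg ⟨1⟩
  exact ⟨g m', hgm ▸ hm.map g⟩

end ThreeChain

theorem stmt18_general {D : Type v} [DistribLattice D] [BoundedOrder D]
    (hD : ∀ s : Set D, ∃ z, IsLUB s z) :
    (∀ d : D, ∃ d' : D, d ⊓ d' = ⊥ ∧ d ⊔ d' = ⊤) ↔
    (∀ (L L' : Type u) [DistribLattice L] [BoundedOrder L]
        [DistribLattice L'] [BoundedOrder L']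
        (φ : BoundedLatticeHom L L'), Function.Injective φ →
        ∀ f : BoundedLatticeHom L D, ∃ g : BoundedLatticeHom L' D, ∀ x : L, g (φ x) = f x) := by
  simp only [← disjoint_iff, ← codisjoint_iff, ← isCompl_iff]
  constructor
  · intro hcompl L L' _ _ _ _ φ hφ f
    have : ComplementedLattice D := ⟨hcompl⟩
    let : BooleanAlgebra D := DistribLattice.booleanAlgebraOfComplemented D
    exact exists_boundedLatticeHom_extension hD hφ f
  · intro hinj d
    let m : ULift (Bool × Bool) := ⟨(true, false)⟩
    have hm : IsCompl m ⟨(false, true)⟩ := ⟨disjoint_iff.2 rfl, codisjoint_iff.2 rfl⟩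
    obtain ⟨g, hg⟩ := hinj _ _ (threeChainHom m)
      (threeChainHom_injective (by decide) (by decide)) (threeChainHom d)
    exact exists_isCompl_of_threeChainHom_extension hm hg

theorem stmt18 {D : Type v} [DistribLattice D] [BoundedOrder D] [Fintype D] :
    (∀ d : D, ∃ d' : D, d ⊓ d' = ⊥ ∧ d ⊔ d' = ⊤) ↔
    (∀ (L L' : Type u) [DistribLattice L] [BoundedOrder L]
        [DistribLattice L'] [BoundedOrder L']
        (φ : BoundedLatticeHom L L'), Function.Injective φ →
        ∀ f : BoundedLatticeHom L D, ∃ g : BoundedLatticeHom L' D, ∀ x : L, g (φ x) = f x) :=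
  letI := Fintype.toCompleteLattice D
  stmt18_general fun s => ⟨sSup s, isLUB_sSup s⟩
end
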